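/- Let L be a residuated lattice. Let E_L be the disjoint union (sigma type) over P ∈ Spec(L) of the quotients L/O(P), and for a ∈ L and P ∈ Spec(L) write a_P for the class of a in L/O(P). Then the family B = {D(F, a) : F a filter of L, a ∈ L}, where D(F, a) = {a_P : P ∈ D(F)}, is a base for a topology on E_L: every point of E_L lies in some member of B, and for any D₁, D₂ ∈ B and x ∈ D₁ ∩ D₂ there exists D ∈ B with x ∈ D ⊆ D₁ ∩ D₂. -/

import Mathlib

/-- A residuated lattice: a bounded lattice with a commutative monoid
operation `mul` whose identity is the top element, and a residuum `himp`
satisfying `mul x y ≤ z ↔ x ≤ himp y z`. Here `⊤` plays the role of `1`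
and `⊥` the role of `0`. -/
class ResiduatedLattice (L : Type*) extends Lattice L, BoundedOrder L where
  mul : L → L → L
  himp : L → L → L
  mul_comm : ∀ x y : L, mul x y = mul y x
  mul_assoc : ∀ x y z : L, mul (mul x y) z = mul x (mul y z)
  mul_top : ∀ x : L, mul x ⊤ = x
  residuation : ∀ x y z : L, mul x y ≤ z ↔ x ≤ himp y z

namespace ResiduatedLattice

variable {L : Type*} [ResiduatedLattice L]

/-- A filter of a residuated lattice: a nonempty, upward closed subset
closed under `mul`. -/
def IsFilter (F : Set L) : Prop :=
  F.Nonempty ∧ (∀ x y : L, x ∈ F → x ≤ y → y ∈ F) ∧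
    ∀ x y : L, x ∈ F → y ∈ F → mul x y ∈ F

/-- A prime filter: a proper filter such that `x ⊔ y ∈ P` implies
`x ∈ P` or `y ∈ P`. -/
def IsPrimeFilter (P : Set L) : Prop :=
  IsFilter P ∧ P ≠ Set.univ ∧ ∀ x y : L, x ⊔ y ∈ P → x ∈ P ∨ y ∈ P

/-- `filterGen X` is the smallest filter containing `X`. -/
def filterGen (X : Set L) : Set L := ⋂₀ {F : Set L | IsFilter F ∧ X ⊆ F}

/-- The prime spectrum: the set of all prime filters. -/
def Spectrum (L : Type*) [ResiduatedLattice L] := {P : Set L // IsPrimeFilter P}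

/-- `D X = {P ∈ Spec L | X ⊄ P}`. -/
def D (X : Set L) : Set (Spectrum L) := {P : Spectrum L | ¬ X ⊆ P.1}

/-- `O P = {x | a ⊔ x = 1 for some a ∉ P}`. -/
def O (P : Set L) : Set L := {x : L | ∃ a ∉ P, a ⊔ x = ⊤}

/-- The congruence relation associated to a filter `F`:
`x ≡_F y` iff `(x → y) ⊗ (y → x) ∈ F`. -/
def rel (F : Set L) (x y : L) : Prop := mul (himp x y) (himp y x) ∈ F

end ResiduatedLattice

namespace ResiduatedLattice

variable {L : Type*} [ResiduatedLattice L]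

/-- The family of sets of the form `D X`, the open sets of the Stone topology. -/
def stoneOpens (L : Type*) [ResiduatedLattice L] : Set (Set (Spectrum L)) :=
  {U : Set (Spectrum L) | ∃ X : Set L, U = D X}

/-- The Stone topology on `Spec(L)`, whose open sets are exactly the `D X`. -/
instance : TopologicalSpace (Spectrum L) :=
  TopologicalSpace.generateFrom (stoneOpens L)

/-- The total space `E_L`: the disjoint union over `P ∈ Spec(L)` of the
quotients `L/O(P)` (quotient by the relation `x ≡ y` iff
`(x → y) ⊗ (y → x) ∈ O(P)`). -/
def EL (L : Type*) [ResiduatedLattice L] :=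
  (P : Spectrum L) × Quot (rel (O P.1))

/-- `a_P`, the class of `a` in the stalk `L/O(P)`, viewed in `E_L`. -/
def stalkMk (P : Spectrum L) (a : L) : EL L := ⟨P, Quot.mk _ a⟩

/-- The canonical projection `π : E_L → Spec(L)`, `a_P ↦ P`. -/
def proj (L : Type*) [ResiduatedLattice L] : EL L → Spectrum L := fun e => e.1

/-- `D(F, a) = {a_P : P ∈ D(F)}`. -/
def DFa (F : Set L) (a : L) : Set (EL L) :=
  {e : EL L | ∃ P ∈ D F, e = stalkMk P a}

/-- The base `B = {D(F, a) : F a filter of L, a ∈ L}` for the topology on `E_L`. -/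
def ELBase (L : Type*) [ResiduatedLattice L] : Set (Set (EL L)) :=
  {S : Set (EL L) | ∃ (F : Set L) (a : L), IsFilter F ∧ S = DFa F a}

/-- The topology `T(B)` on `E_L` generated by the base `B`. -/
instance : TopologicalSpace (EL L) :=
  TopologicalSpace.generateFrom (ELBase L)

end ResiduatedLattice

namespace ResiduatedLattice

/-!
For `e = (a → b) ⊗ (b → a)`, the stalk elements `a_P` and `b_P` agree iff `e ∈ O(P)`, i.e. iff some
`c ∉ P` satisfies `c ∨ e = 1`. The set `e^⊥ = {c | c ∨ e = 1}` is a filter, so the locus where `a`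
and `b` have the same class is the basic open set `D(e^⊥)`. As `D(F) ∩ D(G) = D(F ∩ G)` for filters,
`D(F, a) ∩ D(G, b) = D(F ∩ G ∩ e^⊥, a)`: the family `B` is closed under binary intersections.
-/

section

variable {L : Type*} [ResiduatedLattice L]

theorem gc_mul_himp (y : L) : GaloisConnection (fun x ↦ mul x y) (himp y) :=
  fun x z ↦ residuation x y z

theorem mul_mono_left {x y : L} (h : x ≤ y) (z : L) : mul x z ≤ mul y z :=
  (gc_mul_himp z).monotone_l h

theorem mul_le_left (x y : L) : mul x y ≤ x :=
  calc
    mul x y = mul y x := mul_comm x y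
    _ ≤ mul ⊤ x := mul_mono_left le_top x
    _ = mul x ⊤ := mul_comm ⊤ x
    _ = x := mul_top x

theorem mul_le_right (x y : L) : mul x y ≤ y :=
  mul_comm x y ▸ mul_le_left y x

theorem sup_mul (x y z : L) : mul (x ⊔ y) z = mul x z ⊔ mul y z :=
  (gc_mul_himp z).l_sup

theorem mul_sup (x y z : L) : mul x (y ⊔ z) = mul x y ⊔ mul x z := by
  simp only [mul_comm x, sup_mul]

theorem mul_sup_sup_le (x y z : L) : mul (x ⊔ z) (y ⊔ z) ≤ mul x y ⊔ z := by
  rw [sup_mul, mul_sup]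
  exact sup_le (sup_le_sup_left (mul_le_right x z) _) ((mul_le_left z _).trans le_sup_right)

theorem himp_self (x : L) : himp x x = ⊤ :=
  top_le_iff.1 ((residuation ⊤ x x).1 (mul_le_right ⊤ x))

theorem himp_mul_himp_le (x y z : L) : mul (himp x y) (himp y z) ≤ himp x z := by
  rw [← residuation]
  calc
    mul (mul (himp x y) (himp y z)) x = mul (mul (himp x y) x) (himp y z) := by
      rw [mul_assoc, mul_comm (himp y z), ← mul_assoc]
    _ ≤ mul y (himp y z) := mul_mono_left ((gc_mul_himp x).l_u_le y) _
    _ = mul (himp y z) y := mul_comm _ _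
    _ ≤ z := (gc_mul_himp y).l_u_le z

namespace IsFilter

variable {F G : Set L}

theorem isUpperSet (hF : IsFilter F) : IsUpperSet F :=
  fun x y hxy hx ↦ hF.2.1 x y hx hxy

theorem top_mem (hF : IsFilter F) : ⊤ ∈ F :=
  hF.isUpperSet.top_mem.2 hF.1

theorem mul_mem_iff (hF : IsFilter F) {x y : L} : mul x y ∈ F ↔ x ∈ F ∧ y ∈ F :=
  ⟨fun h ↦ ⟨hF.isUpperSet (mul_le_left x y) h, hF.isUpperSet (mul_le_right x y) h⟩,
    fun h ↦ hF.2.2 x y h.1 h.2⟩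

theorem inter (hF : IsFilter F) (hG : IsFilter G) : IsFilter (F ∩ G) :=
  ⟨⟨⊤, hF.top_mem, hG.top_mem⟩, fun _ _ hx hxy ↦ hF.isUpperSet.inter hG.isUpperSet hxy hx,
    fun x y hx hy ↦ ⟨hF.2.2 x y hx.1 hy.1, hG.2.2 x y hx.2 hy.2⟩⟩

theorem rel_iff (hF : IsFilter F) {x y : L} : rel F x y ↔ himp x y ∈ F ∧ himp y x ∈ F :=
  hF.mul_mem_iff

theorem himp_mem_trans (hF : IsFilter F) {x y z : L} (hxy : himp x y ∈ F) (hyz : himp y z ∈ F) :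
    himp x z ∈ F :=
  hF.isUpperSet (himp_mul_himp_le x y z) (hF.mul_mem_iff.2 ⟨hxy, hyz⟩)

theorem equivalence_rel (hF : IsFilter F) : Equivalence (rel F) where
  refl x := by simpa only [hF.rel_iff, himp_self, and_self] using hF.top_mem
  symm h := hF.rel_iff.2 (hF.rel_iff.1 h).symm
  trans hxy hyz := by
    rw [hF.rel_iff] at hxy hyz ⊢
    exact ⟨hF.himp_mem_trans hxy.1 hyz.1, hF.himp_mem_trans hyz.2 hxy.2⟩

end IsFilter

theorem isFilter_univ : IsFilter (Set.univ : Set L) :=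
  ⟨Set.univ_nonempty, fun _ _ _ _ ↦ Set.mem_univ _, fun _ _ _ _ ↦ Set.mem_univ _⟩

/-- The coannihilator `x^⊥ = {c | c ∨ x = 1}` of an element; `O(P)` is the union of the
coannihilators of the elements outside `P`. -/
def coannihilator (x : L) : Set L := {c : L | c ⊔ x = ⊤}

theorem mem_coannihilator_comm {x y : L} : x ∈ coannihilator y ↔ y ∈ coannihilator x :=
  Eq.congr_left (sup_comm x y)

theorem isFilter_coannihilator (x : L) : IsFilter (coannihilator x) := by
  refine ⟨⟨⊤, top_sup_eq x⟩, fun c d hc hcd ↦ ?_, fun c d hc hd ↦ top_le_iff.1 ?_⟩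
  · exact top_le_iff.1 (hc.ge.trans (sup_le_sup_right hcd x))
  · calc
      ⊤ = mul (c ⊔ x) (d ⊔ x) := by rw [hc, hd, mul_top]
      _ ≤ mul c d ⊔ x := mul_sup_sup_le c d x

theorem coannihilator_mono : Monotone (coannihilator : L → Set L) :=
  fun _ _ hxy c hc ↦ top_le_iff.1 (hc.ge.trans (sup_le_sup_left hxy c))

theorem IsPrimeFilter.sup_notMem {P : Set L} (hP : IsPrimeFilter P) {x y : L} (hx : x ∉ P)
    (hy : y ∉ P) : x ⊔ y ∉ P :=
  fun h ↦ (hP.2.2 x y h).elim hx hy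

theorem mem_O_iff {P : Set L} {x : L} : x ∈ O P ↔ ∃ a ∉ P, x ∈ coannihilator a :=
  exists_congr fun _ ↦ and_congr_right' mem_coannihilator_comm

theorem IsPrimeFilter.isFilter_O {P : Set L} (hP : IsPrimeFilter P) : IsFilter (O P) := by
  refine ⟨?_, fun x y hx hxy ↦ ?_, fun x y hx hy ↦ ?_⟩
  · obtain ⟨a, ha⟩ := (Set.ne_univ_iff_exists_notMem P).1 hP.2.1
    exact ⟨⊤, a, ha, sup_top_eq a⟩
  · obtain ⟨a, ha, hxa⟩ := mem_O_iff.1 hx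
    exact mem_O_iff.2 ⟨a, ha, (isFilter_coannihilator a).isUpperSet hxy hxa⟩
  · obtain ⟨a, ha, hxa⟩ := mem_O_iff.1 hx
    obtain ⟨b, hb, hyb⟩ := mem_O_iff.1 hy
    have hxab : x ∈ coannihilator (a ⊔ b) := coannihilator_mono le_sup_left hxa
    have hyab : y ∈ coannihilator (a ⊔ b) := coannihilator_mono le_sup_right hyb
    exact mem_O_iff.2
      ⟨a ⊔ b, hP.sup_notMem ha hb, (isFilter_coannihilator (a ⊔ b)).mul_mem_iff.2 ⟨hxab, hyab⟩⟩

theorem mem_D_iff {X : Set L} {P : Spectrum L} : P ∈ D X ↔ ∃ x ∈ X, x ∉ P.1 :=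
  Set.not_subset

theorem mem_D_univ (P : Spectrum L) : P ∈ D Set.univ :=
  fun h ↦ P.2.2.1 (Set.univ_subset_iff.1 h)

theorem D_mono : Monotone (D : Set L → Set (Spectrum L)) :=
  fun _ _ hXY _ hX hY ↦ hX (hXY.trans hY)

theorem D_inter {X Y : Set L} (hX : IsUpperSet X) (hY : IsUpperSet Y) :
    D (X ∩ Y) = D X ∩ D Y := by
  refine (D_mono.map_inf_le X Y).antisymm fun P hP ↦ ?_
  obtain ⟨x, hxX, hxP⟩ := mem_D_iff.1 hP.1
  obtain ⟨y, hyY, hyP⟩ := mem_D_iff.1 hP.2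
  exact mem_D_iff.2
    ⟨x ⊔ y, ⟨hX le_sup_left hxX, hY le_sup_right hyY⟩, P.2.sup_notMem hxP hyP⟩

theorem mem_O_iff_mem_D_coannihilator {P : Spectrum L} {x : L} :
    x ∈ O P.1 ↔ P ∈ D (coannihilator x) := by
  simp only [mem_O_iff, mem_D_iff, mem_coannihilator_comm (x := x), and_comm]

theorem exists_eq_stalkMk (e : EL L) : ∃ P a, e = stalkMk P a := by
  obtain ⟨P, q⟩ := e
  obtain ⟨a, rfl⟩ := Quot.exists_rep q
  exact ⟨P, a, rfl⟩

theorem stalkMk_eq_stalkMk_iff_rel {P : Spectrum L} {a b : L} :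
    stalkMk P a = stalkMk P b ↔ rel (O P.1) a b :=
  sigma_mk_injective.eq_iff.trans (P.2.isFilter_O.equivalence_rel.quot_mk_eq_iff a b)

theorem stalkMk_eq_stalkMk_iff_mem_D {P : Spectrum L} {a b : L} :
    stalkMk P a = stalkMk P b ↔ P ∈ D (coannihilator (mul (himp a b) (himp b a))) :=
  stalkMk_eq_stalkMk_iff_rel.trans mem_O_iff_mem_D_coannihilator

theorem stalkMk_mem_DFa_iff {P : Spectrum L} {F : Set L} {a b : L} :
    stalkMk P b ∈ DFa F a ↔ P ∈ D F ∧ stalkMk P b = stalkMk P a := by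
  refine ⟨?_, fun h ↦ ⟨P, h⟩⟩
  rintro ⟨Q, hQ, h⟩
  obtain rfl : P = Q := congrArg (proj L) h
  exact ⟨hQ, h⟩

theorem DFa_inter_DFa {F G : Set L} (hF : IsUpperSet F) (hG : IsUpperSet G) (a b : L) :
    DFa F a ∩ DFa G b = DFa (F ∩ G ∩ coannihilator (mul (himp a b) (himp b a))) a := by
  ext e
  obtain ⟨P, c, rfl⟩ := exists_eq_stalkMk e
  rw [Set.mem_inter_iff]
  simp only [stalkMk_mem_DFa_iff]
  rw [D_inter (hF.inter hG) (isFilter_coannihilator _).isUpperSet, D_inter hF hG,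
    Set.mem_inter_iff, Set.mem_inter_iff, ← stalkMk_eq_stalkMk_iff_mem_D]
  constructor
  · rintro ⟨⟨hPF, hca⟩, hPG, hcb⟩
    exact ⟨⟨⟨hPF, hPG⟩, hca.symm.trans hcb⟩, hca⟩
  · rintro ⟨⟨⟨hPF, hPG⟩, hab⟩, hca⟩
    exact ⟨⟨hPF, hca⟩, hPG, hca.trans hab⟩

theorem inter_mem_ELBase {S T : Set (EL L)} (hS : S ∈ ELBase L) (hT : T ∈ ELBase L) :
    S ∩ T ∈ ELBase L := by
  obtain ⟨F, a, hF, rfl⟩ := hS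
  obtain ⟨G, b, hG, rfl⟩ := hT
  exact ⟨_, a, (hF.inter hG).inter (isFilter_coannihilator _),
    DFa_inter_DFa hF.isUpperSet hG.isUpperSet a b⟩

end

/-- the family `B = {D(F, a)}` is a base for a topology on
`E_L`: every point lies in some member of `B`, and for `D₁, D₂ ∈ B` and
`x ∈ D₁ ∩ D₂` there is `D ∈ B` with `x ∈ D ⊆ D₁ ∩ D₂`. -/
theorem ELBase_isBase (L : Type*) [ResiduatedLattice L] :
    (∀ e : EL L, ∃ S ∈ ELBase L, e ∈ S) ∧
      ∀ S₁ ∈ ELBase L, ∀ S₂ ∈ ELBase L, ∀ e ∈ S₁ ∩ S₂,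
        ∃ S ∈ ELBase L, e ∈ S ∧ S ⊆ S₁ ∩ S₂ := by
  refine ⟨fun e ↦ ?_, fun S₁ hS₁ S₂ hS₂ e he ↦ ⟨S₁ ∩ S₂, inter_mem_ELBase hS₁ hS₂, he, subset_rfl⟩⟩
  obtain ⟨P, a, rfl⟩ := exists_eq_stalkMk e
  exact ⟨DFa Set.univ a, ⟨Set.univ, a, isFilter_univ, rfl⟩,
    stalkMk_mem_DFa_iff.2 ⟨mem_D_univ P, rfl⟩⟩

end ResiduatedLattice
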